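/- Let {J_{ij}} be i.i.d. nonnegative heavy-tailed couplings with tail index 0 < α < 1, i.e., P(J_{12} ≥ x) = x^{−α} L(x) with L slowly varying. Then with probability tending to 1 as N → ∞, the Hamiltonian H has at least one nontrivial local minimum on {±1}^N. -/

import Mathlib

open MeasureTheory ProbabilityTheory Filter Finset

/-- Index set for the couplings: unordered pairs `{i,j}` with `i < j`, encoded as ordered pairs. -/
abbrev CoupIdx (N : ℕ) := {q : Fin N × Fin N // q.1 < q.2}

/-- The symmetric coupling matrix built from couplings indexed by pairs `i < j`. -/
noncomputable def JofReal {N : ℕ} (w : CoupIdx N → ℝ) (i j : Fin N) : ℝ :=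
  if h : i < j then w ⟨(i, j), h⟩ else if h' : j < i then w ⟨(j, i), h'⟩ else 0

/-- Hamiltonian of the disordered Curie--Weiss model:
`H(σ) = -(1/N) ∑_{i<j} J_{ij} σ_i σ_j`. -/
noncomputable def Ham {N : ℕ} (J : Fin N → Fin N → ℝ) (σ : Fin N → ℤ) : ℝ :=
  -(1 / (N : ℝ)) * ∑ q ∈ Finset.univ.filter (fun q : Fin N × Fin N => q.1 < q.2),
      J q.1 q.2 * (σ q.1 : ℝ) * (σ q.2 : ℝ)

/-- `(i,j)` is a bully bond: `J_{ij} > max(∑_{k∉{i,j}} J_{ik}, ∑_{k∉{i,j}} J_{jk})`. -/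
def IsBullyBond {N : ℕ} (J : Fin N → Fin N → ℝ) (i j : Fin N) : Prop :=
  i ≠ j ∧
    max (∑ k ∈ (Finset.univ.erase i).erase j, J i k)
      (∑ k ∈ (Finset.univ.erase i).erase j, J j k) < J i j

/-- `σ` is a nontrivial local minimum of `H`. -/
def IsNontrivialLocalMin {N : ℕ} (J : Fin N → Fin N → ℝ) (σ : Fin N → ℤ) : Prop :=
  (∀ i, σ i = 1 ∨ σ i = -1) ∧ σ ≠ (fun _ => 1) ∧ σ ≠ (fun _ => -1) ∧
    ∀ i, Ham J σ ≤ Ham J (Function.update σ i (-σ i))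

/-!
Call a bond heavy when its coupling is at least `t`, and write `G` for the tail of the law. Since
`G` decays more slowly than `1 / x`, the mean truncated at `t` is `O(t * G t)`, so by independence
and Markov's inequality the chance that a given bond is heavy while the other bonds at one of its
endpoints add up to `t` is `O(N * G t ^ 2)`. Choose `t` with `G t` of order `N ^ (-7 / 4)`: as
`N ^ 3 * G t ^ 2 → 0`, with high probability every heavy bond dominates both of its endpoints, and
as `N ^ 2 * G t → ∞`, there are heavy bonds in two prescribed disjoint parts of the graph. Now fix
the spins to be `+1` on one of these two bonds and `-1` on the other, and minimise the energy over
the remaining spins. The fixed spins do not want to flip either, because their own bond outweighs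
everything else they feel.
-/

section SpinFlip

variable {N : ℕ} {J : Fin N → Fin N → ℝ} {σ : Fin N → ℤ} {i j : Fin N}

lemma sum_filter_lt_eq_sum_erase {ι M : Type*} [Fintype ι] [LinearOrder ι] [AddCommMonoid M]
    {f : ι → ι → M} (hf : ∀ p q, f p q = f q p) (i : ι)
    (h0 : ∀ p q, p ≠ i → q ≠ i → f p q = 0) :
    ∑ q : ι × ι with q.1 < q.2, f q.1 q.2 = ∑ k ∈ univ.erase i, f i k := by
  symm
  refine sum_of_injOn (fun k => (min i k, max i k)) ?_ ?_ ?_ ?_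
  · intro k _ l _ h
    grind
  · intro k hk
    simpa [eq_comm] using hk
  · rintro ⟨p, q⟩ hpq hnot
    have hlt : p < q := by simpa using hpq
    refine h0 p q (fun h => hnot ⟨q, ?_⟩) fun h => hnot ⟨p, ?_⟩
    · grind
    · grind
  · intro k _
    rcases le_total i k with h | h
    · simp only [min_eq_left h, max_eq_right h]
    · simp only [min_eq_right h, max_eq_left h, hf i k]

lemma Ham_update_neg_sub_Ham (hJ : ∀ i j, J i j = J j i) (σ : Fin N → ℤ) (i : Fin N) :
    Ham J (Function.update σ i (-σ i)) - Ham J σ =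
      2 / N * (σ i * ∑ k ∈ univ.erase i, J i k * σ k) := by
  set τ := Function.update σ i (-σ i)
  have hτ : ∀ k, k ≠ i → τ k = σ k := fun k hk => Function.update_of_ne hk _ _
  have hτi : τ i = -σ i := Function.update_self _ _ _
  have hsum := sum_filter_lt_eq_sum_erase (f := fun p q => J p q * τ p * τ q - J p q * σ p * σ q)
    (fun p q => by rw [hJ p q]; ring) i fun p q hp hq => by rw [hτ p hp, hτ q hq, sub_self]
  rw [Ham, Ham, ← mul_sub, ← sum_sub_distrib, hsum, mul_sum, mul_sum, mul_sum]
  refine sum_congr rfl fun k hk => ?_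
  rw [hτi, hτ k (ne_of_mem_erase hk)]
  push_cast
  ring

lemma Ham_le_Ham_update_neg_of_nonneg (hJ : ∀ i j, J i j = J j i)
    (h : 0 ≤ σ i * ∑ k ∈ univ.erase i, J i k * σ k) :
    Ham J σ ≤ Ham J (Function.update σ i (-σ i)) := by
  rw [← sub_nonneg, Ham_update_neg_sub_Ham hJ]
  positivity

lemma IsBullyBond.symm (hJ : ∀ i j, J i j = J j i) (h : IsBullyBond J i j) :
    IsBullyBond J j i := by
  refine ⟨h.1.symm, ?_⟩
  rw [erase_right_comm, max_comm, hJ j i]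
  exact h.2

lemma IsBullyBond.Ham_le_Ham_update_neg (hJ : ∀ i j, J i j = J j i) (hJ0 : ∀ i j, 0 ≤ J i j)
    (hσ : ∀ i, σ i = 1 ∨ σ i = -1) (h : IsBullyBond J i j) (hij : σ i = σ j) :
    Ham J σ ≤ Ham J (Function.update σ i (-σ i)) := by
  have hdom : ∑ k ∈ (univ.erase i).erase j, J i k ≤ J i j := (le_max_left _ _).trans h.2.le
  have habs : ∀ k, |(σ k : ℝ)| = 1 := fun k => by rcases hσ k with hk | hk <;> simp [hk]
  have hsq : (σ i : ℝ) * σ i = 1 := by rcases hσ i with hi | hi <;> simp [hi]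
  refine Ham_le_Ham_update_neg_of_nonneg hJ ?_
  have hrest : -∑ k ∈ (univ.erase i).erase j, J i k ≤
      σ i * ∑ k ∈ (univ.erase i).erase j, J i k * σ k := by
    refine neg_le_of_abs_le ?_
    rw [abs_mul, habs, one_mul]
    refine (abs_sum_le_sum_abs _ _).trans_eq (sum_congr rfl fun k _ => ?_)
    rw [abs_mul, habs, mul_one, abs_of_nonneg (hJ0 i k)]
  rw [← add_sum_erase _ _ (mem_erase.2 ⟨h.1.symm, mem_univ j⟩), ← hij, mul_add, mul_left_comm, hsq]
  linarith

lemma exists_spin_eqOn_and_forall_notMem_le_update {ι β : Type*} [Finite ι] [DecidableEq ι]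
    [LinearOrder β] (E : (ι → ℤ) → β) {τ : ι → ℤ} (hτ : ∀ i, τ i = 1 ∨ τ i = -1) (T : Set ι) :
    ∃ σ : ι → ℤ, (∀ i, σ i = 1 ∨ σ i = -1) ∧ Set.EqOn σ τ T ∧
      ∀ i ∉ T, E σ ≤ E (Function.update σ i (-σ i)) := by
  let S : Set (ι → ℤ) := {σ | (∀ i, σ i = 1 ∨ σ i = -1) ∧ Set.EqOn σ τ T}
  have hfin : S.Finite :=
    (Set.Finite.pi' fun _ => Set.toFinite {1, -1}).subset fun σ hσ => hσ.1
  obtain ⟨σ, ⟨hσ, hστ⟩, hmin⟩ := Set.exists_min_image S E hfin ⟨τ, hτ, Set.eqOn_refl τ T⟩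
  refine ⟨σ, hσ, hστ, fun i hi => hmin _ ⟨fun k => ?_, fun k hk => ?_⟩⟩
  · rcases eq_or_ne k i with rfl | hki
    · rcases hσ k with h | h <;> simp [h]
    · rw [Function.update_of_ne hki]
      exact hσ k
  · rw [Function.update_of_ne (ne_of_mem_of_not_mem hk hi)]
    exact hστ hk

lemma exists_isNontrivialLocalMin_of_isBullyBond (hJ : ∀ i j, J i j = J j i)
    (hJ0 : ∀ i j, 0 ≤ J i j) {a b c d : Fin N} (hab : IsBullyBond J a b) (hcd : IsBullyBond J c d)
    (hac : a ≠ c) (had : a ≠ d) (hbc : b ≠ c) (hbd : b ≠ d) :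
    ∃ σ : Fin N → ℤ, IsNontrivialLocalMin J σ := by
  let τ : Fin N → ℤ := fun i => if i = a ∨ i = b then 1 else -1
  have hτ : ∀ i, τ i = 1 ∨ τ i = -1 := fun i => ite_eq_or_eq _ _ _
  obtain ⟨σ, hσ, hστ, hmin⟩ :=
    exists_spin_eqOn_and_forall_notMem_le_update (Ham J) hτ {a, b, c, d}
  have ha : σ a = 1 := by simp [hστ (show a ∈ ({a, b, c, d} : Set _) by simp), τ]
  have hb : σ b = 1 := by simp [hστ (show b ∈ ({a, b, c, d} : Set _) by simp), τ]
  have hc : σ c = -1 := by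
    simp [hστ (show c ∈ ({a, b, c, d} : Set _) by simp), τ, hac.symm, hbc.symm]
  have hd : σ d = -1 := by
    simp [hστ (show d ∈ ({a, b, c, d} : Set _) by simp), τ, had.symm, hbd.symm]
  refine ⟨σ, hσ, fun h => ?_, fun h => ?_, fun i => ?_⟩
  · simp [h] at hc
  · simp [h] at ha
  · by_cases hi : i ∈ ({a, b, c, d} : Set (Fin N))
    · rcases hi with rfl | rfl | rfl | rfl
      · exact hab.Ham_le_Ham_update_neg hJ hJ0 hσ (ha.trans hb.symm)
      · exact (hab.symm hJ).Ham_le_Ham_update_neg hJ hJ0 hσ (hb.trans ha.symm)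
      · exact hcd.Ham_le_Ham_update_neg hJ hJ0 hσ (hc.trans hd.symm)
      · exact (hcd.symm hJ).Ham_le_Ham_update_neg hJ hJ0 hσ (hd.trans hc.symm)
    · exact hmin i hi

lemma isBullyBond_of_forall_sum_lt (hJ : ∀ i j, J i j = J j i) {t : ℝ}
    (hrow : ∀ i j, i ≠ j → t ≤ J i j → ∑ k ∈ (univ.erase i).erase j, J i k < t)
    (hij : i ≠ j) (ht : t ≤ J i j) : IsBullyBond J i j := by
  refine ⟨hij, (max_lt (hrow i j hij ht) ?_).trans_le ht⟩
  rw [erase_right_comm]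
  exact hrow j i hij.symm (ht.trans_eq (hJ i j))

lemma exists_isNontrivialLocalMin_of_forall_sum_lt (hJ : ∀ i j, J i j = J j i)
    (hJ0 : ∀ i j, 0 ≤ J i j) {t : ℝ}
    (hrow : ∀ i j, i ≠ j → t ≤ J i j → ∑ k ∈ (univ.erase i).erase j, J i k < t) {u : Fin 4 → Fin N}
    (hu : Function.Injective u) (h₀₁ : t ≤ J (u 0) (u 1)) (h₂₃ : t ≤ J (u 2) (u 3)) :
    ∃ σ : Fin N → ℤ, IsNontrivialLocalMin J σ :=
  exists_isNontrivialLocalMin_of_isBullyBond hJ hJ0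
    (isBullyBond_of_forall_sum_lt hJ hrow (hu.ne (by decide)) h₀₁)
    (isBullyBond_of_forall_sum_lt hJ hrow (hu.ne (by decide)) h₂₃)
    (hu.ne (by decide)) (hu.ne (by decide)) (hu.ne (by decide)) (hu.ne (by decide))

end SpinFlip

section TruncatedMean

/-- The mean of `min x t` under `ν`, as an extended nonnegative real. Only positive values of
`min x t` count, which makes no difference for laws of nonnegative variables. -/
noncomputable def truncatedMean (ν : Measure ℝ) (t : ℝ) : ENNReal :=
  ∫⁻ x, ENNReal.ofReal (min x t) ∂ν

lemma truncatedMean_map {Ω : Type*} [MeasurableSpace Ω] {μ : Measure Ω} {X : Ω → ℝ}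
    (hX : AEMeasurable X μ) (t : ℝ) :
    truncatedMean (μ.map X) t = ∫⁻ ω, ENNReal.ofReal (min (X ω) t) ∂μ :=
  lintegral_map' (by fun_prop) hX

lemma truncatedMean_smul (c : ENNReal) (ν : Measure ℝ) (t : ℝ) :
    truncatedMean (c • ν) t = c * truncatedMean ν t :=
  lintegral_smul_measure _ _

lemma truncatedMean_le (ν : Measure ℝ) [IsProbabilityMeasure ν] (t : ℝ) :
    truncatedMean ν t ≤ ENNReal.ofReal t := by
  calc truncatedMean ν t ≤ ∫⁻ _, ENNReal.ofReal t ∂ν :=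
        lintegral_mono fun x => ENNReal.ofReal_le_ofReal (min_le_right _ _)
    _ = ENNReal.ofReal t := by rw [lintegral_const, measure_univ, mul_one]

lemma truncatedMean_add_le (ν : Measure ℝ) (t s : ℝ) :
    truncatedMean ν (t + s) ≤ truncatedMean ν t + ENNReal.ofReal s * ν (Set.Ici t) := by
  rw [← lintegral_indicator_const measurableSet_Ici, truncatedMean, truncatedMean,
    ← lintegral_add_left (by fun_prop)]
  refine lintegral_mono fun x => ?_
  rcases le_or_gt t x with hx | hx
  · rw [Set.indicator_of_mem (Set.mem_Ici.2 hx), min_eq_right hx]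
    exact (ENNReal.ofReal_le_ofReal (min_le_right _ _)).trans ENNReal.ofReal_add_le
  · rw [Set.indicator_of_notMem (Set.notMem_Ici.2 hx), add_zero, min_eq_left hx.le]
    exact ENNReal.ofReal_le_ofReal (min_le_left _ _)

variable {ν : Measure ℝ} {a ρ : ℝ}

lemma truncatedMean_mul_le [IsFiniteMeasure ν] {C t : ℝ} (ht : 0 ≤ t) (ha : 1 ≤ a)
    (hC0 : 0 ≤ C) (hC : C + (a - 1) ≤ C * (a * ρ))
    (htail : ρ * ν.real (Set.Ici t) ≤ ν.real (Set.Ici (a * t)))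
    (hmean : truncatedMean ν t ≤ ENNReal.ofReal (C * t * ν.real (Set.Ici t))) :
    truncatedMean ν (a * t) ≤ ENNReal.ofReal (C * (a * t) * ν.real (Set.Ici (a * t))) := by
  set g := ν.real (Set.Ici t) with hg
  have hs : 0 ≤ (a - 1) * t := mul_nonneg (by linarith) ht
  calc truncatedMean ν (a * t) = truncatedMean ν (t + (a - 1) * t) := by ring_nf
    _ ≤ truncatedMean ν t + ENNReal.ofReal ((a - 1) * t) * ν (Set.Ici t) :=
        truncatedMean_add_le ν t _
    _ ≤ ENNReal.ofReal (C * t * g) + ENNReal.ofReal ((a - 1) * t * g) := by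
        rw [ENNReal.ofReal_mul hs, hg, ofReal_measureReal]
        gcongr
    _ = ENNReal.ofReal ((C + (a - 1)) * (t * g)) := by
        rw [← ENNReal.ofReal_add (by positivity) (by positivity)]
        ring_nf
    _ ≤ ENNReal.ofReal (C * (a * ρ) * (t * g)) := by gcongr
    _ = ENNReal.ofReal (C * (a * t) * (ρ * g)) := by ring_nf
    _ ≤ ENNReal.ofReal (C * (a * t) * ν.real (Set.Ici (a * t))) := by gcongr

lemma truncatedMean_pow_mul_le [IsFiniteMeasure ν] {C t : ℝ} (ht : 0 ≤ t) (ha : 1 ≤ a)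
    (hC0 : 0 ≤ C) (hC : C + (a - 1) ≤ C * (a * ρ))
    (htail : ∀ x, t ≤ x → ρ * ν.real (Set.Ici x) ≤ ν.real (Set.Ici (a * x)))
    (hmean : truncatedMean ν t ≤ ENNReal.ofReal (C * t * ν.real (Set.Ici t))) (k : ℕ) :
    truncatedMean ν (a ^ k * t) ≤
      ENNReal.ofReal (C * (a ^ k * t) * ν.real (Set.Ici (a ^ k * t))) := by
  induction k with
  | zero => simpa using hmean
  | succ k ih =>
    have htk : t ≤ a ^ k * t := le_mul_of_one_le_left ht (one_le_pow₀ ha)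
    rw [pow_succ', mul_assoc]
    exact truncatedMean_mul_le (ht.trans htk) ha hC0 hC (htail _ htk) ih

lemma tendsto_measureReal_Ici_atTop (ν : Measure ℝ) [IsFiniteMeasure ν] :
    Tendsto (fun x => ν.real (Set.Ici x)) atTop (nhds 0) := by
  have hinter : ⋂ x : ℝ, Set.Ici x = ∅ :=
    Set.eq_empty_of_forall_notMem fun x hx =>
      (lt_add_one x).not_ge (Set.mem_iInter.1 hx (x + 1))
  have h := tendsto_measure_iInter_atTop (μ := ν) (s := fun x : ℝ => Set.Ici x)
    (fun _ => measurableSet_Ici.nullMeasurableSet) antitone_Ici ⟨0, measure_ne_top _ _⟩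
  rw [hinter, measure_empty] at h
  exact (ENNReal.tendsto_toReal ENNReal.zero_ne_top).comp h

lemma exists_mul_le_and_le_of_tendsto_zero {u : ℕ → ℝ} (hu : Tendsto u atTop (nhds 0))
    (hρ : 0 ≤ ρ) (hstep : ∀ k, ρ * u k ≤ u (k + 1)) {p : ℝ} (hp0 : 0 < p) (hp : p < u 0) :
    ∃ k, ρ * p ≤ u k ∧ u k ≤ p := by
  classical
  have hex : ∃ k, u k ≤ p := ((hu.eventually_lt_const hp0).exists).imp fun _ h => h.le
  obtain ⟨k, hk⟩ : ∃ k, Nat.find hex = k + 1 :=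
    Nat.exists_eq_succ_of_ne_zero fun h => (h ▸ Nat.find_spec hex).not_gt hp
  have hpk : p ≤ u k := (not_le.1 (Nat.find_min hex (by omega))).le
  exact ⟨k + 1, (mul_le_mul_of_nonneg_left hpk hρ).trans (hstep k), hk ▸ Nat.find_spec hex⟩

lemma exists_threshold_truncatedMean_le [IsProbabilityMeasure ν] (ha : 1 < a) (haρ : 1 < a * ρ)
    (htail : ∀ᶠ x in atTop, ρ * ν.real (Set.Ici x) < ν.real (Set.Ici (a * x))) :
    ∃ C δ : ℝ, 0 ≤ C ∧ 0 < δ ∧ ∀ p, 0 < p → p < δ → ∃ t : ℝ, 0 < t ∧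
      ρ * p ≤ ν.real (Set.Ici t) ∧ ν.real (Set.Ici t) ≤ p ∧
      truncatedMean ν t ≤ ENNReal.ofReal (C * t * ν.real (Set.Ici t)) := by
  have hρ : 0 < ρ := pos_of_mul_pos_right (by linarith : 0 < a * ρ) (by linarith)
  obtain ⟨x₀, hx₀⟩ := eventually_atTop.1 (htail.and (eventually_gt_atTop 0))
  have hx₀pos : 0 < x₀ := (hx₀ x₀ le_rfl).2
  set G : ℝ → ℝ := fun x => ν.real (Set.Ici x)
  have hGanti : Antitone G := fun x y h => measureReal_mono (Set.Ici_subset_Ici.2 h)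
  have hG₀ : 0 < G x₀ := calc
    0 ≤ ρ * G x₀ := mul_nonneg hρ.le measureReal_nonneg
    _ < G (a * x₀) := (hx₀ x₀ le_rfl).1
    _ ≤ G x₀ := hGanti (le_mul_of_one_le_left hx₀pos.le ha.le)
  let s : ℕ → ℝ := fun k => a ^ k * x₀
  have hs : ∀ k, x₀ ≤ s k := fun k => le_mul_of_one_le_left hx₀pos.le (one_le_pow₀ ha.le)
  have hs_top : Tendsto s atTop atTop :=
    (tendsto_pow_atTop_atTop_of_one_lt ha).atTop_mul_const hx₀pos
  have hstep : ∀ k, ρ * G (s k) ≤ G (s (k + 1)) := fun k => by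
    simp only [s, pow_succ', mul_assoc]
    exact (hx₀ _ (hs k)).1.le
  set C : ℝ := max ((a - 1) / (a * ρ - 1)) (1 / G x₀)
  have hC : C + (a - 1) ≤ C * (a * ρ) := by
    have := (div_le_iff₀ (by linarith)).1 (le_max_left _ _ : (a - 1) / (a * ρ - 1) ≤ C)
    linarith
  have hC₀ : 1 ≤ C * G x₀ := (div_le_iff₀ hG₀).1 (le_max_right _ _)
  have hCpos : 0 ≤ C := le_max_of_le_right (by positivity)
  have hmean₀ : truncatedMean ν x₀ ≤ ENNReal.ofReal (C * x₀ * G x₀) := by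
    refine (truncatedMean_le ν x₀).trans (ENNReal.ofReal_le_ofReal ?_)
    rw [mul_right_comm]
    exact le_mul_of_one_le_left hx₀pos.le hC₀
  refine ⟨C, G x₀, hCpos, hG₀, fun p hp0 hp => ?_⟩
  obtain ⟨k, hlow, hup⟩ := exists_mul_le_and_le_of_tendsto_zero
    ((tendsto_measureReal_Ici_atTop ν).comp hs_top) hρ.le hstep hp0 (by simpa [s] using hp)
  exact ⟨s k, hx₀pos.trans_le (hs k), hlow, hup, truncatedMean_pow_mul_le hx₀pos.le ha.le hCpos hC
    (fun x hx => (hx₀ x hx).1.le) hmean₀ k⟩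

lemma exists_eventually_mul_lt_of_regularlyVarying {G L : ℝ → ℝ} {α : ℝ} (hα : α < 1)
    (ha : 1 < a) (hL : Tendsto (fun x => L (a * x) / L x) atTop (nhds 1)) (hG0 : ∀ x, 0 ≤ G x)
    (hG : ∀ x, 0 < x → G x = x ^ (-α) * L x) :
    ∃ ρ, 1 < a * ρ ∧ ∀ᶠ x in atTop, ρ * G x < G (a * x) := by
  have ha0 : 0 < a := one_pos.trans ha
  have hratio : Tendsto (fun x => G (a * x) / G x) atTop (nhds (a ^ (-α))) := by
    rw [← mul_one (a ^ (-α))]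
    refine (hL.const_mul (a ^ (-α))).congr' ?_
    filter_upwards [eventually_gt_atTop 0] with x hx
    have hxα : x ^ (-α) ≠ 0 := (Real.rpow_pos_of_pos hx _).ne'
    rw [hG x hx, hG (a * x) (mul_pos ha0 hx), Real.mul_rpow ha0.le hx.le]
    field_simp
  have hlt : a⁻¹ < a ^ (-α) := by
    rw [← Real.rpow_neg_one]
    exact Real.rpow_lt_rpow_of_exponent_lt ha (by linarith)
  obtain ⟨ρ, haρ, hρα⟩ := exists_between hlt
  refine ⟨ρ, (inv_lt_iff_one_lt_mul₀' ha0).1 haρ, ?_⟩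
  filter_upwards [hratio.eventually_const_lt hρα] with x hx
  have hGx : G x ≠ 0 := fun h => by
    rw [h, div_zero] at hx
    exact hx.not_gt ((inv_pos.2 ha0).trans haρ)
  exact (lt_div_iff₀ ((hG0 x).lt_of_ne' hGx)).1 hx

end TruncatedMean

section Independence

variable {Ω : Type*} [MeasurableSpace Ω] {μ : Measure Ω}

lemma ofReal_le_sum_ofReal_min {κ : Type*} {S : Finset κ} {x : κ → ℝ} {t : ℝ}
    (h : t ≤ ∑ k ∈ S, x k) : ENNReal.ofReal t ≤ ∑ k ∈ S, ENNReal.ofReal (min (x k) t) := by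
  by_cases hbig : ∃ k ∈ S, t ≤ x k
  · obtain ⟨k, hk, hkt⟩ := hbig
    calc ENNReal.ofReal t = ENNReal.ofReal (min (x k) t) := by rw [min_eq_right hkt]
      _ ≤ _ := single_le_sum (f := fun k => ENNReal.ofReal (min (x k) t)) (fun _ _ => zero_le) hk
  · push Not at hbig
    calc ENNReal.ofReal t ≤ ENNReal.ofReal (∑ k ∈ S, x k) := ENNReal.ofReal_le_ofReal h
      _ ≤ ∑ k ∈ S, ENNReal.ofReal (x k) :=
        le_sum_of_subadditive _ ENNReal.ofReal_zero.le (fun _ _ => ENNReal.ofReal_add_le) _ _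
      _ = _ := sum_congr rfl fun k hk => by rw [min_eq_left (hbig k hk).le]

lemma measure_le_sum_le_sum_truncatedMean_div {κ : Type*} {X : κ → Ω → ℝ} {S : Finset κ}
    (hX : ∀ k ∈ S, AEMeasurable (X k) μ) {t : ℝ} (ht : 0 < t) :
    μ {ω | t ≤ ∑ k ∈ S, X k ω} ≤ (∑ k ∈ S, truncatedMean (μ.map (X k)) t) / ENNReal.ofReal t := by
  have hmin : ∀ k ∈ S, AEMeasurable (fun ω => ENNReal.ofReal (min (X k ω) t)) μ := fun k hk =>
    ((hX k hk).min aemeasurable_const).ennreal_ofReal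
  rw [sum_congr rfl fun k hk => truncatedMean_map (hX k hk) t, ← lintegral_finsetSum' _ hmin]
  refine (measure_mono fun ω hω => ?_).trans (meas_ge_le_lintegral_div
    (Finset.aemeasurable_fun_sum _ hmin) (ENNReal.ofReal_pos.2 ht).ne' ENNReal.ofReal_ne_top)
  exact ofReal_le_sum_ofReal_min hω

lemma map_restrict_preimage_of_indepFun {E F : Type*} [MeasurableSpace E] [MeasurableSpace F]
    {X : Ω → E} {Y : Ω → F} (hX : Measurable X) (hY : Measurable Y) (hYX : IndepFun Y X μ)
    {B : Set F} (hB : MeasurableSet B) :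
    (μ.restrict (Y ⁻¹' B)).map X = μ (Y ⁻¹' B) • μ.map X := by
  ext A hA
  rw [Measure.map_apply hX hA, Measure.restrict_apply' (hY hB), Set.inter_comm,
    hYX.measure_inter_preimage_eq_mul _ _ hB hA, Measure.smul_apply, Measure.map_apply hX hA,
    smul_eq_mul]

lemma measure_mem_and_le_sum_le_of_indepFun {κ F : Type*} [MeasurableSpace F] {X : κ → Ω → ℝ}
    {Y : Ω → F} {S : Finset κ} (hX : ∀ k ∈ S, Measurable (X k)) (hY : Measurable Y)
    (hYX : ∀ k ∈ S, IndepFun Y (X k) μ) {B : Set F} (hB : MeasurableSet B) {t : ℝ} (ht : 0 < t) :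
    μ {ω | Y ω ∈ B ∧ t ≤ ∑ k ∈ S, X k ω} ≤
      μ (Y ⁻¹' B) * (∑ k ∈ S, truncatedMean (μ.map (X k)) t) / ENNReal.ofReal t := by
  have hset : {ω | Y ω ∈ B ∧ t ≤ ∑ k ∈ S, X k ω} = {ω | t ≤ ∑ k ∈ S, X k ω} ∩ Y ⁻¹' B :=
    Set.inter_comm _ _
  rw [hset, ← Measure.restrict_apply' (hY hB), mul_sum]
  refine (measure_le_sum_le_sum_truncatedMean_div (fun k hk => (hX k hk).aemeasurable) ht).trans_eq
    (congrArg (· / _) (sum_congr rfl fun k hk => ?_))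
  rw [map_restrict_preimage_of_indepFun (hX k hk) hY (hYX k hk) hB, truncatedMean_smul]

lemma measure_forall_notMem_le_exp_of_iIndepFun {ι : Type*} [Fintype ι]
    {E : ι → Type*} [∀ k, MeasurableSpace (E k)] {X : ∀ k, Ω → E k} (hX : iIndepFun X μ)
    (hXm : ∀ k, Measurable (X k)) {B : ∀ k, Set (E k)} (hB : ∀ k, MeasurableSet (B k)) {p : ℝ}
    (hp : ∀ k, p ≤ μ.real (X k ⁻¹' B k)) :
    μ {ω | ∀ k, X k ω ∉ B k} ≤ ENNReal.ofReal (Real.exp (-(Fintype.card ι * p))) := by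
  have := hX.isProbabilityMeasure
  have hone : ∀ k, μ (X k ⁻¹' (B k)ᶜ) ≤ ENNReal.ofReal (Real.exp (-p)) := fun k => by
    rw [← ofReal_measureReal, Set.preimage_compl, probReal_compl_eq_one_sub (hXm k (hB k))]
    exact ENNReal.ofReal_le_ofReal (by linarith [hp k, Real.add_one_le_exp (-p)])
  calc μ {ω | ∀ k, X k ω ∉ B k} = μ (⋂ k, X k ⁻¹' (B k)ᶜ) := by
        congr 1
        ext ω
        simp only [Set.mem_ofPred_eq, Set.mem_iInter, Set.mem_preimage, Set.mem_compl_iff]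
    _ = ∏ k, μ (X k ⁻¹' (B k)ᶜ) := hX.meas_iInter fun k => ⟨_, (hB k).compl, rfl⟩
    _ ≤ ∏ _k : ι, ENNReal.ofReal (Real.exp (-p)) := prod_le_prod' fun k _ => hone k
    _ = ENNReal.ofReal (Real.exp (-(Fintype.card ι * p))) := by
        rw [prod_const, card_univ, ← ENNReal.ofReal_pow (Real.exp_pos _).le, ← Real.exp_nat_mul,
          mul_neg]

end Independence

section Couplings

variable {N : ℕ} {i j k l : Fin N}

/-- The index of the coupling between two distinct vertices, in whichever order they are given. -/
def CoupIdx.ofNe (h : i ≠ j) : CoupIdx N := ⟨(min i j, max i j), min_lt_max.2 h⟩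

lemma CoupIdx.ofNe_eq_ofNe_iff {hij : i ≠ j} {hkl : k ≠ l} :
    CoupIdx.ofNe hij = CoupIdx.ofNe hkl ↔ i = k ∧ j = l ∨ i = l ∧ j = k := by
  simp only [CoupIdx.ofNe, Subtype.mk.injEq, Prod.mk.injEq]
  grind

lemma JofReal_eq_apply_ofNe (w : CoupIdx N → ℝ) (h : i ≠ j) :
    JofReal w i j = w (CoupIdx.ofNe h) := by
  rcases h.lt_or_gt with h | h
  · simp only [JofReal, dif_pos h, CoupIdx.ofNe, min_eq_left h.le, max_eq_right h.le]
  · simp only [JofReal, dif_pos h, dif_neg h.not_gt, CoupIdx.ofNe, min_eq_right h.le,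
      max_eq_left h.le]

lemma JofReal_comm (w : CoupIdx N → ℝ) (i j : Fin N) : JofReal w i j = JofReal w j i := by
  rcases eq_or_ne i j with rfl | h
  · rfl
  · rw [JofReal_eq_apply_ofNe w h, JofReal_eq_apply_ofNe w h.symm,
      CoupIdx.ofNe_eq_ofNe_iff.2 (Or.inr ⟨rfl, rfl⟩)]

lemma JofReal_nonneg {w : CoupIdx N → ℝ} (hw : ∀ q, 0 ≤ w q) (i j : Fin N) :
    0 ≤ JofReal w i j := by
  unfold JofReal
  split_ifs
  exacts [hw _, hw _, le_rfl]

/-- The joint law of i.i.d. couplings with common law `ν` on the bonds of the complete graph. -/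
noncomputable abbrev couplingLaw (ν : Measure ℝ) (N : ℕ) : Measure (CoupIdx N → ℝ) :=
  Measure.pi fun _ => ν

variable (ν : Measure ℝ) [IsProbabilityMeasure ν]

lemma measurePreserving_JofReal (h : i ≠ j) :
    MeasurePreserving (fun w => JofReal w i j) (couplingLaw ν N) ν := by
  simp only [JofReal_eq_apply_ofNe _ h]
  exact measurePreserving_eval _ _

lemma iIndepFun_JofReal {κ : Type*} {u v : κ → Fin N} (huv : ∀ x, u x ≠ v x)
    (hinj : Function.Injective fun x => CoupIdx.ofNe (huv x)) :
    iIndepFun (fun x w => JofReal w (u x) (v x)) (couplingLaw ν N) := by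
  simp only [JofReal_eq_apply_ofNe _ (huv _)]
  exact (iIndepFun_pi (X := fun _ x => x) fun _ => aemeasurable_id).precomp hinj

lemma indepFun_JofReal (hij : i ≠ j) (hik : i ≠ k) (hjk : j ≠ k) :
    IndepFun (fun w => JofReal w i j) (fun w => JofReal w i k) (couplingLaw ν N) := by
  simp only [JofReal_eq_apply_ofNe _ hij, JofReal_eq_apply_ofNe _ hik]
  refine (iIndepFun_pi (X := fun _ x => x) fun _ => aemeasurable_id).indepFun fun h => ?_
  grind [CoupIdx.ofNe_eq_ofNe_iff]

lemma ae_forall_nonneg_couplingLaw (hν : ∀ᵐ x ∂ν, 0 ≤ x) (N : ℕ) :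
    ∀ᵐ w ∂couplingLaw ν N, ∀ q, 0 ≤ w q :=
  ae_all_iff.2 fun q => (Measure.quasiMeasurePreserving_eval (fun _ => ν) q).ae hν

lemma couplingLaw_forall_lt_le {ι κ : Type*} [Fintype ι] [Fintype κ] {u : ι → Fin N}
    {v : κ → Fin N} (hu : Function.Injective u) (hv : Function.Injective v)
    (huv : ∀ x y, u x ≠ v y) (t : ℝ) :
    couplingLaw ν N {w | ∀ x y, JofReal w (u x) (v y) < t} ≤
      ENNReal.ofReal
        (Real.exp (-(Fintype.card ι * Fintype.card κ * ν.real (Set.Ici t)))) := by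
  have hinj : Function.Injective fun x : ι × κ => CoupIdx.ofNe (huv x.1 x.2) := by
    rintro ⟨x, y⟩ ⟨x', y'⟩ h
    rcases CoupIdx.ofNe_eq_ofNe_iff.1 h with ⟨hx, hy⟩ | ⟨hx, -⟩
    · exact Prod.ext (hu hx) (hv hy)
    · exact absurd hx (huv x y')
  have hlaw := fun x : ι × κ => measurePreserving_JofReal ν (huv x.1 x.2)
  have h := measure_forall_notMem_le_exp_of_iIndepFun
    (iIndepFun_JofReal ν (fun x : ι × κ => huv x.1 x.2) hinj) (fun x => (hlaw x).measurable)
    (fun _ => measurableSet_Ici (a := t))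
    fun x => ((hlaw x).measureReal_preimage measurableSet_Ici.nullMeasurableSet).ge
  simpa [Prod.forall] using h

lemma couplingLaw_le_and_le_sum_le (hij : i ≠ j) {t : ℝ} (ht : 0 < t) :
    couplingLaw ν N {w | t ≤ JofReal w i j ∧ t ≤ ∑ k ∈ (univ.erase i).erase j, JofReal w i k} ≤
      ν (Set.Ici t) * (N * truncatedMean ν t) / ENNReal.ofReal t := by
  have hmem : ∀ k ∈ (univ.erase i).erase j, i ≠ k ∧ j ≠ k := fun k hk => by
    simpa [eq_comm, and_comm] using hk
  have hlaw := fun k hk => measurePreserving_JofReal ν (hmem k hk).1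
  have hsum : ∑ k ∈ (univ.erase i).erase j,
      truncatedMean ((couplingLaw ν N).map fun w => JofReal w i k) t ≤ N * truncatedMean ν t := by
    rw [sum_congr rfl fun k hk => by rw [(hlaw k hk).map_eq], sum_const, nsmul_eq_mul]
    gcongr
    simpa using card_le_univ ((univ.erase i).erase j)
  refine (measure_mem_and_le_sum_le_of_indepFun (fun k hk => (hlaw k hk).measurable)
    (measurePreserving_JofReal ν hij).measurable
    (fun k hk => indepFun_JofReal ν hij (hmem k hk).1 (hmem k hk).2) measurableSet_Ici ht).trans ?_
  rw [(measurePreserving_JofReal ν hij).measure_preimage measurableSet_Ici.nullMeasurableSet]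
  gcongr

lemma couplingLaw_exists_le_and_le_sum_le {t C : ℝ} (ht : 0 < t)
    (hmean : truncatedMean ν t ≤ ENNReal.ofReal (C * t * ν.real (Set.Ici t))) :
    couplingLaw ν N {w | ∃ i j, i ≠ j ∧ t ≤ JofReal w i j ∧
        t ≤ ∑ k ∈ (univ.erase i).erase j, JofReal w i k} ≤
      ENNReal.ofReal (C * N ^ 3 * ν.real (Set.Ici t) ^ 2) := by
  set g := ν.real (Set.Ici t) with hg
  have hg0 : 0 ≤ g := measureReal_nonneg
  let bad : Fin N × Fin N → Set (CoupIdx N → ℝ) := fun x => {w | x.1 ≠ x.2 ∧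
    t ≤ JofReal w x.1 x.2 ∧ t ≤ ∑ k ∈ (univ.erase x.1).erase x.2, JofReal w x.1 k}
  have hbad : ∀ x, couplingLaw ν N (bad x) ≤ ENNReal.ofReal (C * N * g ^ 2) := fun x => by
    by_cases hx : x.1 = x.2
    · simp [bad, hx]
    calc couplingLaw ν N (bad x)
        ≤ ν (Set.Ici t) * (N * truncatedMean ν t) / ENNReal.ofReal t :=
          (measure_mono fun w hw => hw.2).trans (couplingLaw_le_and_le_sum_le ν hx ht)
      _ ≤ ENNReal.ofReal g * (ENNReal.ofReal N * ENNReal.ofReal (C * t * g)) /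
            ENNReal.ofReal t := by
          rw [ENNReal.ofReal_natCast, hg, ofReal_measureReal]
          gcongr
      _ = ENNReal.ofReal (C * N * g ^ 2) := by
          rw [← ENNReal.ofReal_mul (by positivity), ← ENNReal.ofReal_mul hg0,
            ← ENNReal.ofReal_div_of_pos ht]
          congr 1
          field_simp
  calc _ = couplingLaw ν N (⋃ x, bad x) := by
        congr 1
        ext w
        simp only [bad, Set.mem_ofPred_eq, Set.mem_iUnion, Prod.exists]
    _ ≤ ∑ x, couplingLaw ν N (bad x) := measure_iUnion_fintype_le _ _
    _ ≤ ∑ _x : Fin N × Fin N, ENNReal.ofReal (C * N * g ^ 2) := sum_le_sum fun x _ => hbad x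
    _ = ENNReal.ofReal (C * N ^ 3 * g ^ 2) := by
        rw [sum_const, nsmul_eq_mul, ← ENNReal.ofReal_natCast,
          ← ENNReal.ofReal_mul (Nat.cast_nonneg _), card_univ, Fintype.card_prod, Fintype.card_fin,
          Nat.cast_mul]
        ring_nf

lemma couplingLaw_compl_exists_isNontrivialLocalMin_le (hν : ∀ᵐ x ∂ν, 0 ≤ x) {n : ℕ}
    (hn : 4 * n ≤ N) {t C : ℝ} (ht : 0 < t) (hC : 0 ≤ C)
    (hmean : truncatedMean ν t ≤ ENNReal.ofReal (C * t * ν.real (Set.Ici t))) :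
    couplingLaw ν N {w | ∃ σ : Fin N → ℤ, IsNontrivialLocalMin (JofReal w) σ}ᶜ ≤
      ENNReal.ofReal (2 * Real.exp (-(n ^ 2 * ν.real (Set.Ici t))) +
        C * N ^ 3 * ν.real (Set.Ici t) ^ 2) := by
  obtain ⟨e⟩ : Nonempty (Fin 4 × Fin n ↪ Fin N) :=
    Function.Embedding.nonempty_of_card_le (by simpa using hn)
  let noHeavy : Fin 4 → Fin 4 → Set (CoupIdx N → ℝ) := fun a b =>
    {w | ∀ x y, JofReal w (e (a, x)) (e (b, y)) < t}
  let badRow : Set (CoupIdx N → ℝ) := {w | ∃ i j, i ≠ j ∧ t ≤ JofReal w i j ∧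
    t ≤ ∑ k ∈ (univ.erase i).erase j, JofReal w i k}
  have hblock : ∀ a b x y, e (a, x) = e (b, y) → a = b := fun a b x y h =>
    congrArg Prod.fst (e.injective h)
  have hnoHeavy : ∀ a b, a ≠ b → couplingLaw ν N (noHeavy a b) ≤
      ENNReal.ofReal (Real.exp (-(n ^ 2 * ν.real (Set.Ici t)))) := fun a b hab => by
    simpa [sq] using couplingLaw_forall_lt_le ν (e.injective.comp (Prod.mk_right_injective a))
      (e.injective.comp (Prod.mk_right_injective b)) (fun x y h => hab (hblock a b x y h)) t
  have hcover : ({w | ∃ σ : Fin N → ℤ, IsNontrivialLocalMin (JofReal w) σ}ᶜ : Set _)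
      ≤ᵐ[couplingLaw ν N] ((noHeavy 0 1 ∪ noHeavy 2 3) ∪ badRow : Set _) := by
    filter_upwards [ae_forall_nonneg_couplingLaw ν hν N] with w hw hmin
    by_contra hgood
    change w ∉ (noHeavy 0 1 ∪ noHeavy 2 3) ∪ badRow at hgood
    simp only [noHeavy, badRow, Set.mem_union, Set.mem_ofPred_eq, not_or,
      not_forall, not_lt, not_exists, not_and, not_le] at hgood
    obtain ⟨⟨⟨x₀, x₁, h₀₁⟩, x₂, x₃, h₂₃⟩, hrow⟩ := hgood
    exact hmin (exists_isNontrivialLocalMin_of_forall_sum_lt (JofReal_comm w) (JofReal_nonneg hw)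
      hrow (u := fun a => e (a, ![x₀, x₁, x₂, x₃] a)) (fun a b h => hblock a b _ _ h) h₀₁ h₂₃)
  calc couplingLaw ν N _ ≤ couplingLaw ν N ((noHeavy 0 1 ∪ noHeavy 2 3) ∪ badRow) :=
        measure_mono_ae hcover
    _ ≤ (couplingLaw ν N (noHeavy 0 1) + couplingLaw ν N (noHeavy 2 3)) +
          couplingLaw ν N badRow :=
        (measure_union_le _ _).trans (add_le_add_left (measure_union_le _ _) _)
    _ ≤ (ENNReal.ofReal (Real.exp (-(n ^ 2 * ν.real (Set.Ici t)))) +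
          ENNReal.ofReal (Real.exp (-(n ^ 2 * ν.real (Set.Ici t))))) +
          ENNReal.ofReal (C * N ^ 3 * ν.real (Set.Ici t) ^ 2) :=
        add_le_add (add_le_add (hnoHeavy 0 1 (by decide)) (hnoHeavy 2 3 (by decide)))
          (couplingLaw_exists_le_and_le_sum_le ν ht hmean)
    _ = _ := by
        rw [← ENNReal.ofReal_add (by positivity) (by positivity), ← two_mul,
          ← ENNReal.ofReal_add (by positivity) (by positivity)]

end Couplings

section Asymptotics

lemma tendsto_measure_one_of_tendsto_measure_compl_zero {ι : Type*} {l : Filter ι}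
    {Ω : ι → Type*} [∀ i, MeasurableSpace (Ω i)] (μ : ∀ i, Measure (Ω i))
    [∀ i, IsProbabilityMeasure (μ i)] {s : ∀ i, Set (Ω i)}
    (h : Tendsto (fun i => μ i (s i)ᶜ) l (nhds 0)) :
    Tendsto (fun i => μ i (s i)) l (nhds 1) := by
  have hlim : Tendsto (fun i => 1 - μ i (s i)ᶜ) l (nhds 1) := by
    simpa using ENNReal.Tendsto.sub tendsto_const_nhds h (Or.inl ENNReal.one_ne_top)
  refine tendsto_of_tendsto_of_tendsto_of_le_of_le hlim tendsto_const_nhds (fun i => ?_)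
    fun i => prob_le_one
  rw [tsub_le_iff_right, ← measure_univ (μ := μ i)]
  exact measure_univ_le_add_compl _

/-- The bound on the probability of failure obtained by placing the threshold at tail level
`n ^ (-7 / 4)`, where `n` is a quarter of the number of vertices. -/
noncomputable def failureRate (C ρ : ℝ) (n : ℕ) : ℝ :=
  2 * Real.exp (-(ρ * (n : ℝ) ^ (1 / 4 : ℝ))) + 512 * C * (n : ℝ) ^ (-(1 / 2) : ℝ)

lemma tendsto_failureRate (C : ℝ) {ρ : ℝ} (hρ : 0 < ρ) :
    Tendsto (failureRate C ρ) atTop (nhds 0) := by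
  have hcast : Tendsto (fun n : ℕ => (n : ℝ)) atTop atTop := tendsto_natCast_atTop_atTop
  have hmany : Tendsto (fun n : ℕ => ρ * (n : ℝ) ^ (1 / 4 : ℝ)) atTop atTop :=
    ((tendsto_rpow_atTop (by norm_num)).comp hcast).const_mul_atTop hρ
  have hfew : Tendsto (fun n : ℕ => (n : ℝ) ^ (-(1 / 2) : ℝ)) atTop (nhds 0) :=
    (tendsto_rpow_neg_atTop (by norm_num)).comp hcast
  have hsum :=
    ((Real.tendsto_exp_neg_atTop_nhds_zero.comp hmany).const_mul 2).add (hfew.const_mul (512 * C))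
  rwa [mul_zero, mul_zero, add_zero] at hsum

lemma two_mul_exp_add_le_failureRate {C ρ g : ℝ} {n N : ℕ} (hC : 0 ≤ C) (hn : 0 < n)
    (hN : N ≤ 8 * n) (hg : 0 ≤ g) (hlow : ρ * (n : ℝ) ^ (-(7 / 4) : ℝ) ≤ g)
    (hup : g ≤ (n : ℝ) ^ (-(7 / 4) : ℝ)) :
    2 * Real.exp (-(n ^ 2 * g)) + C * N ^ 3 * g ^ 2 ≤ failureRate C ρ n := by
  have hn0 : (0 : ℝ) < n := Nat.cast_pos.2 hn
  have hN' : (N : ℝ) ≤ 8 * n := by exact_mod_cast hN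
  have hmany : ρ * (n : ℝ) ^ (1 / 4 : ℝ) ≤ n ^ 2 * g := calc
    ρ * (n : ℝ) ^ (1 / 4 : ℝ) = n ^ 2 * (ρ * (n : ℝ) ^ (-(7 / 4) : ℝ)) := by
      rw [mul_left_comm, ← Real.rpow_natCast, ← Real.rpow_add hn0]
      norm_num
    _ ≤ n ^ 2 * g := by gcongr
  have hfew : C * N ^ 3 * g ^ 2 ≤ 512 * C * (n : ℝ) ^ (-(1 / 2) : ℝ) := calc
    C * N ^ 3 * g ^ 2 ≤ C * (8 * n) ^ 3 * ((n : ℝ) ^ (-(7 / 4) : ℝ)) ^ 2 := by gcongr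
    _ = 512 * C * ((n : ℝ) ^ 3 * ((n : ℝ) ^ (-(7 / 4) : ℝ)) ^ 2) := by ring
    _ = 512 * C * (n : ℝ) ^ (-(1 / 2) : ℝ) := by
      rw [sq, ← Real.rpow_natCast, ← Real.rpow_add hn0, ← Real.rpow_add hn0]
      norm_num
  rw [failureRate]
  gcongr

end Asymptotics

theorem heavy_tailed_has_nontrivial_local_min_general (ν : Measure ℝ) [IsProbabilityMeasure ν]
    (hν : ∀ᵐ x ∂ν, 0 ≤ x) {a ρ : ℝ} (ha : 1 < a) (haρ : 1 < a * ρ)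
    (htail : ∀ᶠ x in atTop, ρ * ν.real (Set.Ici x) < ν.real (Set.Ici (a * x))) :
    Tendsto (fun N : ℕ => couplingLaw ν N {w | ∃ σ : Fin N → ℤ, IsNontrivialLocalMin (JofReal w) σ})
      atTop (nhds 1) := by
  have hρ : 0 < ρ := pos_of_mul_pos_right (by linarith : 0 < a * ρ) (by linarith)
  obtain ⟨C, δ, hC, hδ, hthreshold⟩ := exists_threshold_truncatedMean_le ha haρ htail
  have hquarter : Tendsto (fun N : ℕ => N / 4) atTop atTop :=
    Nat.tendsto_div_const_atTop four_ne_zero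
  have hlevel : Tendsto (fun N : ℕ => ((N / 4 : ℕ) : ℝ) ^ (-(7 / 4) : ℝ)) atTop (nhds 0) :=
    (tendsto_rpow_neg_atTop (by norm_num)).comp (tendsto_natCast_atTop_atTop.comp hquarter)
  have hrate : Tendsto (fun N : ℕ => ENNReal.ofReal (failureRate C ρ (N / 4))) atTop (nhds 0) := by
    simpa using ENNReal.tendsto_ofReal ((tendsto_failureRate C hρ).comp hquarter)
  refine tendsto_measure_one_of_tendsto_measure_compl_zero (couplingLaw ν)
    (tendsto_of_tendsto_of_tendsto_of_le_of_le' tendsto_const_nhds hrate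
      (Eventually.of_forall fun _ => zero_le) ?_)
  filter_upwards [hlevel.eventually_lt_const hδ, eventually_ge_atTop 4] with N hNδ hN4
  have hn : 0 < N / 4 := by omega
  obtain ⟨t, ht, hlow, hup, hmean⟩ := hthreshold _ (Real.rpow_pos_of_pos (by positivity) _) hNδ
  exact (couplingLaw_compl_exists_isNontrivialLocalMin_le ν hν (by omega) ht hC hmean).trans
    (ENNReal.ofReal_le_ofReal
      (two_mul_exp_add_le_failureRate hC hn (by omega) measureReal_nonneg hlow hup))

/-- for i.i.d. nonnegative heavy-tailed couplings with tail
`P(J ≥ x) = x^{-α} L(x)`, `0 < α < 1`, `L` slowly varying, with probability tending to `1`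
as `N → ∞` the Hamiltonian has a nontrivial local minimum on `{±1}^N`. -/
theorem heavy_tailed_has_nontrivial_local_min (α : ℝ) (hα0 : 0 < α) (hα1 : α < 1)
    (L : ℝ → ℝ) (hL : ∀ a : ℝ, 0 < a → Tendsto (fun x => L (a * x) / L x) atTop (nhds 1))
    (ν : Measure ℝ) [IsProbabilityMeasure ν]
    (hnonneg : ν {x : ℝ | x < 0} = 0)
    (htail : ∀ x : ℝ, 0 < x → (ν {y : ℝ | x ≤ y}).toReal = x ^ (-α) * L x) :
    Tendsto
      (fun N : ℕ => (Measure.pi fun _ : CoupIdx N => ν)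
        {w : CoupIdx N → ℝ | ∃ σ : Fin N → ℤ, IsNontrivialLocalMin (JofReal w) σ})
      atTop (nhds 1) := by
  obtain ⟨ρ, hρ, hdecay⟩ := exists_eventually_mul_lt_of_regularlyVarying hα1 one_lt_two
    (hL 2 two_pos) (fun _ => measureReal_nonneg) htail
  exact heavy_tailed_has_nontrivial_local_min_general ν
    (by simpa [ae_iff, not_le] using hnonneg) one_lt_two hρ hdecay
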